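/- arXiv:1903.01153 — 2 statements merged into one kernel-verified Lean document; each statement's English description precedes it below -/
import Mathlib

section
/- Forward simulation of apply actions. Let s be a state of the compiled task P_Λ that encodes the action model Ξ' and the world state w (i.e., s ∩ F = w). If the action apply_{ξ,ω} is applicable in s, then the ground STRIPS action ξ'(ω) is applicable in w (pre(ξ'(ω)) ⊆ w), and the successor state θ(s, apply_{ξ,ω}) encodes the same action model Ξ' and the world state θ(w, ξ'(ω)) = (w \ del(ξ'(ω))) ∪ add(ξ'(ω)). -/
/-!
Only world fluents and `modeProg` occur in the effects of `applyAct ξ ω`, so its successor is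
described by a single membership formula (`mem_succ_applyAct`). On model fluents that formula
reduces to membership in `s`, hence the encoded model is unchanged. On a world fluent `g` it says:
either `g` is in `s` and is not `f[ω]` for an `f` with `del_f(ξ) ∈ s`, or `g = f[ω]` for an `f`
with `add_f(ξ) ∈ s`. Reading `s` through the encoding turns these into membership in the images
defining the ground action of the model, with additions prevailing over deletions on both sides.
This matters because grounding need not be injective: an added and a deleted lifted fluent may
have the same ground instance.
-/

namespace PlanLearn

/-! ## STRIPS planning -/

/-- A STRIPS action over a set of fluents `F`: preconditions, positive effects, negative effects. -/
structure StripsAction (F : Type*) where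
  pre : Set F
  add : Set F
  del : Set F

/-- A STRIPS action is applicable in a state iff its preconditions hold. -/
def StripsAction.Applicable {F : Type*} (a : StripsAction F) (s : Set F) : Prop :=
  a.pre ⊆ s

/-- Successor state of a STRIPS action: `θ(s,a) = (s \ del(a)) ∪ add(a)`. -/
def StripsAction.succ {F : Type*} (a : StripsAction F) (s : Set F) : Set F :=
  (s \ a.del) ∪ a.add

/-- A sequence of STRIPS actions is applicable in a state if each action is applicable in
the state reached by its predecessors. -/
def StripsApplicable {F : Type*} : Set F → List (StripsAction F) → Prop
  | _, [] => True
  | s, a :: rest => a.Applicable s ∧ StripsApplicable (a.succ s) rest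

/-- Final state of executing a sequence of STRIPS actions. -/
def StripsExec {F : Type*} : Set F → List (StripsAction F) → Set F
  | s, [] => s
  | s, a :: rest => StripsExec (a.succ s) rest

/-! ## Classical planning with conditional effects -/

/-- A set of literals over `F`, given by the fluents required true and the fluents required false. -/
structure LitSet (F : Type*) where
  pos : Set F
  neg : Set F

/-- A set of literals holds in a state. -/
def LitSet.Holds {F : Type*} (L : LitSet F) (s : Set F) : Prop :=
  L.pos ⊆ s ∧ ∀ f ∈ L.neg, f ∉ s

/-- An action with conditional effects: a precondition (a condition on states) and a set of
conditional effects `C ▷ E`. -/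
structure CondAction (F : Type*) where
  pre : Set F → Prop
  effs : Set (LitSet F × LitSet F)

/-- Applicability of a conditional-effects action. -/
def CondAction.Applicable {F : Type*} (b : CondAction F) (s : Set F) : Prop := b.pre s

/-- Successor state of a conditional-effects action: for every conditional effect whose
condition holds, remove the fluents its effect makes false and add the fluents its effect
makes true (additions prevail over deletions). -/
def CondAction.succ {F : Type*} (b : CondAction F) (s : Set F) : Set F :=
  (s \ {f | ∃ ce ∈ b.effs, LitSet.Holds ce.1 s ∧ f ∈ ce.2.neg}) ∪
    {f | ∃ ce ∈ b.effs, LitSet.Holds ce.1 s ∧ f ∈ ce.2.pos}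

/-- Applicability of a sequence of conditional-effects actions. -/
def CondApplicable {F : Type*} : Set F → List (CondAction F) → Prop
  | _, [] => True
  | s, b :: rest => b.Applicable s ∧ CondApplicable (b.succ s) rest

/-- Final state of executing a sequence of conditional-effects actions. -/
def CondExec {F : Type*} : Set F → List (CondAction F) → Set F
  | s, [] => s
  | s, b :: rest => CondExec (b.succ s) rest

/-- A conditional-effects planning task: a set of actions, an initial state and a goal. -/
structure CondTask (F : Type*) where
  acts : Set (CondAction F)
  init : Set F
  goal : Set F

/-- A plan solves a conditional-effects planning task iff all its actions belong to the task,
it is applicable in the initial state, and the goal holds in its final state. -/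
def CondTask.Solves {F : Type*} (T : CondTask F) (π : List (CondAction F)) : Prop :=
  (∀ b ∈ π, b ∈ T.acts) ∧ CondApplicable T.init π ∧ T.goal ⊆ CondExec T.init π

/-! ## Predicates, objects, ground and lifted fluents, action models -/

/-- Ground fluents: predicates `P` (with arities `arP`) instantiated on objects `O`. -/
def GFluent (P O : Type*) (arP : P → ℕ) := Σ p : P, Fin (arP p) → O

/-- Lifted fluents: predicates `P` instantiated on the variable names `v₁, …, v_k`. -/
def VFluent (P : Type*) (arP : P → ℕ) (k : ℕ) := Σ p : P, Fin (arP p) → Fin k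

/-- Ground instance `f[ω]` of a lifted fluent `f` under the binding `ω` of variable names
to objects. -/
def groundVF {P O : Type*} {arP : P → ℕ} {k : ℕ} (ω : Fin k → O) (f : VFluent P arP k) :
    GFluent P O arP := ⟨f.1, fun i => ω (f.2 i)⟩

/-- A STRIPS operator schema of arity `k`: preconditions, positive and negative effects, all
lifted fluents mentioning only the variable names `v₁, …, v_k`. -/
structure Schema (P : Type*) (arP : P → ℕ) (k : ℕ) where
  pre : Set (VFluent P arP k)
  add : Set (VFluent P arP k)
  del : Set (VFluent P arP k)

/-- The ground STRIPS action `ξ'(ω)` obtained from a schema by substituting each variable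
name `vᵢ` by the object `ωᵢ`. -/
def Schema.ground {P O : Type*} {arP : P → ℕ} {k : ℕ} (σ : Schema P arP k)
    (ω : Fin k → O) : StripsAction (GFluent P O arP) where
  pre := groundVF ω '' σ.pre
  add := groundVF ω '' σ.add
  del := groundVF ω '' σ.del

/-- An action model over schema headers `X` (with arities `arX`): one schema per header. -/
def Model (P : Type*) (arP : P → ℕ) (X : Type*) (arX : X → ℕ) :=
  ∀ ξ : X, Schema P arP (arX ξ)

/-- A ground plan step `ξ(ω)`: a schema header together with a binding of its parameters. -/
def GroundStep (O X : Type*) (arX : X → ℕ) := Σ ξ : X, Fin (arX ξ) → O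

/-- The sequence of ground STRIPS actions obtained from plan steps under an action model. -/
def groundPlan {P O X : Type*} {arP : P → ℕ} {arX : X → ℕ} (M : Model P arP X arX)
    (steps : List (GroundStep O X arX)) : List (StripsAction (GFluent P O arP)) :=
  steps.map fun st => (M st.1).ground st.2

/-- The ground-action sequence of the steps under model `M` is applicable in `s0` and its
final state is `sn`. -/
def FollowsExample {P O X : Type*} {arP : P → ℕ} {arX : X → ℕ} (M : Model P arP X arX)
    (s0 sn : Set (GFluent P O arP)) (steps : List (GroundStep O X arX)) : Prop :=
  StripsApplicable s0 (groundPlan M steps) ∧ StripsExec s0 (groundPlan M steps) = sn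

/-- The action model `M` solves the learning task `Λ = (Ψ, Σ)` with labels
`lab = ⟨(s₀ᵗ, sₙᵗ)⟩_t`: for every label there is a plan of ground actions of `M` applicable in
`s₀ᵗ` whose final state is `sₙᵗ`. -/
def SolvesLearning {P O X : Type*} {arP : P → ℕ} {arX : X → ℕ} {τ : ℕ}
    (M : Model P arP X arX)
    (lab : Fin τ → Set (GFluent P O arP) × Set (GFluent P O arP)) : Prop :=
  ∀ t : Fin τ, ∃ steps : List (GroundStep O X arX),
    FollowsExample M (lab t).1 (lab t).2 steps

/-! ## The compiled task `P_Λ` -/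

/-- Fluents of the compiled task `P_Λ`: world fluents `F`, model fluents `pre_f(ξ)`,
`del_f(ξ)`, `add_f(ξ)`, the `mode_prog` fluent and the `test_t` fluents. -/
inductive CFluent (P O X : Type*) (arP : P → ℕ) (arX : X → ℕ) (τ : ℕ) where
  | world : GFluent P O arP → CFluent P O X arP arX τ
  | preF : (ξ : X) → VFluent P arP (arX ξ) → CFluent P O X arP arX τ
  | delF : (ξ : X) → VFluent P arP (arX ξ) → CFluent P O X arP arX τ
  | addF : (ξ : X) → VFluent P arP (arX ξ) → CFluent P O X arP arX τ
  | modeProg : CFluent P O X arP arX τ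
  | test : Fin τ → CFluent P O X arP arX τ

variable {P O X : Type*} {arP : P → ℕ} {arX : X → ℕ} {τ : ℕ}

/-- `programPre_{f,ξ}`: requires `mode_prog` and `pre_f(ξ)` true and `del_f(ξ)`, `add_f(ξ)`
false; deletes `pre_f(ξ)`. -/
def programPre (ξ : X) (f : VFluent P arP (arX ξ)) :
    CondAction (CFluent P O X arP arX τ) where
  pre s := CFluent.modeProg ∈ s ∧ CFluent.preF ξ f ∈ s ∧
    CFluent.delF ξ f ∉ s ∧ CFluent.addF ξ f ∉ s
  effs := {(⟨∅, ∅⟩, ⟨∅, {CFluent.preF ξ f}⟩)}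

/-- `programEff_{f,ξ}`: requires `mode_prog` true and `del_f(ξ)`, `add_f(ξ)` false; adds
`del_f(ξ)` if `pre_f(ξ)` holds, and adds `add_f(ξ)` if `pre_f(ξ)` does not hold. -/
def programEff (ξ : X) (f : VFluent P arP (arX ξ)) :
    CondAction (CFluent P O X arP arX τ) where
  pre s := CFluent.modeProg ∈ s ∧ CFluent.delF ξ f ∉ s ∧ CFluent.addF ξ f ∉ s
  effs := {(⟨{CFluent.preF ξ f}, ∅⟩, ⟨{CFluent.delF ξ f}, ∅⟩),
           (⟨∅, {CFluent.preF ξ f}⟩, ⟨{CFluent.addF ξ f}, ∅⟩)}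

/-- `apply_{ξ,ω}`: applicable in `s` iff for every lifted fluent `f`, `pre_f(ξ) ∈ s` implies
`f[ω] ∈ s`; deletes `f[ω]` whenever `del_f(ξ) ∈ s`, adds `f[ω]` whenever `add_f(ξ) ∈ s`, and
deletes `mode_prog`. -/
def applyAct (ξ : X) (ω : Fin (arX ξ) → O) :
    CondAction (CFluent P O X arP arX τ) where
  pre s := ∀ f : VFluent P arP (arX ξ),
    CFluent.preF ξ f ∈ s → CFluent.world (groundVF ω f) ∈ s
  effs := {ce | (∃ f : VFluent P arP (arX ξ),
                  ce = (⟨{CFluent.delF ξ f}, ∅⟩, ⟨∅, {CFluent.world (groundVF ω f)}⟩)) ∨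
                (∃ f : VFluent P arP (arX ξ),
                  ce = (⟨{CFluent.addF ξ f}, ∅⟩, ⟨{CFluent.world (groundVF ω f)}, ∅⟩)) ∨
                ce = (⟨∅, ∅⟩, ⟨∅, {CFluent.modeProg}⟩)}

/-- The initial state of the example following example `t` (for the last example, its own
final state, i.e. no change of world fluents). -/
def nextInit (lab : Fin τ → Set (GFluent P O arP) × Set (GFluent P O arP)) (t : Fin τ) :
    Set (GFluent P O arP) :=
  if h : t.1 + 1 < τ then (lab ⟨t.1 + 1, h⟩).1 else (lab t).2

/-- `validate_t`: applicable iff the world fluents equal `sₙᵗ`, `mode_prog` is false, `test_j`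
holds exactly for `j < t`; adds `test_t` and replaces the world fluents `sₙᵗ` by `s₀^{t+1}`. -/
def validate (lab : Fin τ → Set (GFluent P O arP) × Set (GFluent P O arP)) (t : Fin τ) :
    CondAction (CFluent P O X arP arX τ) where
  pre s := (∀ g, CFluent.world g ∈ s ↔ g ∈ (lab t).2) ∧ CFluent.modeProg ∉ s ∧
    (∀ j : Fin τ, CFluent.test j ∈ s ↔ j < t)
  effs := {(⟨∅, ∅⟩,
    ⟨insert (CFluent.test t) (CFluent.world '' (nextInit lab t \ (lab t).2)),
     CFluent.world '' ((lab t).2 \ nextInit lab t)⟩)}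

/-- The actions `A_Λ` of the compiled task. -/
def compiledActs (lab : Fin τ → Set (GFluent P O arP) × Set (GFluent P O arP)) :
    Set (CondAction (CFluent P O X arP arX τ)) :=
  {a | (∃ ξ f, a = programPre ξ f) ∨ (∃ ξ f, a = programEff ξ f) ∨
       (∃ ξ ω, a = applyAct ξ ω) ∨ (∃ t, a = validate lab t)}

/-- The initial state `I_Λ` of the compiled task: the world fluents of `s₀¹`, all the fluents
`pre_f(ξ)`, and `mode_prog`. -/
def compiledInit [NeZero τ]
    (lab : Fin τ → Set (GFluent P O arP) × Set (GFluent P O arP)) :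
    Set (CFluent P O X arP arX τ) :=
  {c | (∃ g ∈ (lab 0).1, c = CFluent.world g) ∨ (∃ ξ f, c = CFluent.preF ξ f) ∨
       c = CFluent.modeProg}

/-- The goal `G_Λ` of the compiled task: all the `test_t` fluents. -/
def compiledGoal : Set (CFluent P O X arP arX τ) := {c | ∃ t, c = CFluent.test t}

/-- The compiled classical planning task with conditional effects `P_Λ`. -/
def compiledTask [NeZero τ]
    (lab : Fin τ → Set (GFluent P O arP) × Set (GFluent P O arP)) :
    CondTask (CFluent P O X arP arX τ) :=
  ⟨compiledActs lab, compiledInit lab, compiledGoal⟩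

/-- A state of the compiled task encodes the action model `M`. -/
def Encodes (s : Set (CFluent P O X arP arX τ)) (M : Model P arP X arX) : Prop :=
  ∀ (ξ : X) (f : VFluent P arP (arX ξ)),
    (CFluent.preF ξ f ∈ s ↔ f ∈ (M ξ).pre) ∧
    (CFluent.delF ξ f ∈ s ↔ f ∈ (M ξ).del) ∧
    (CFluent.addF ξ f ∈ s ↔ f ∈ (M ξ).add)

/-- The action model encoded by a state of the compiled task. -/
def extractModel (s : Set (CFluent P O X arP arX τ)) : Model P arP X arX :=
  fun ξ => { pre := {f | CFluent.preF ξ f ∈ s}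
             add := {f | CFluent.addF ξ f ∈ s}
             del := {f | CFluent.delF ξ f ∈ s} }

/-- A state of the compiled task encodes the world state `w` (`s ∩ F = w`). -/
def EncodesWorld (s : Set (CFluent P O X arP arX τ)) (w : Set (GFluent P O arP)) : Prop :=
  ∀ g, CFluent.world g ∈ s ↔ g ∈ w

/-- `a` is one of the `apply_{ξ,ω}` actions. -/
def IsApplyAction (a : CondAction (CFluent P O X arP arX τ)) : Prop :=
  ∃ (ξ : X) (ω : Fin (arX ξ) → O), a = applyAct ξ ω

/-- `a` is one of the programming actions `programPre_{f,ξ}` or `programEff_{f,ξ}`. -/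
def IsProgramAction (a : CondAction (CFluent P O X arP arX τ)) : Prop :=
  (∃ (ξ : X) (f : VFluent P arP (arX ξ)), a = programPre ξ f) ∨
  (∃ (ξ : X) (f : VFluent P arP (arX ξ)), a = programEff ξ f)

/-- `c` is one of the model fluents `pre_f(ξ)`, `del_f(ξ)`, `add_f(ξ)`. -/
def IsModelFluent (c : CFluent P O X arP arX τ) : Prop :=
  (∃ ξ f, c = CFluent.preF ξ f) ∨ (∃ ξ f, c = CFluent.delF ξ f) ∨
  (∃ ξ f, c = CFluent.addF ξ f)

/-- Membership in the successor of an `apply` action, with its conditional effects unfolded. -/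
theorem mem_succ_applyAct (s : Set (CFluent P O X arP arX τ)) (ξ : X) (ω : Fin (arX ξ) → O)
    (c : CFluent P O X arP arX τ) :
    c ∈ (applyAct ξ ω).succ s ↔
      (c ∈ s ∧ (¬ ∃ f, CFluent.delF ξ f ∈ s ∧ c = CFluent.world (groundVF ω f)) ∧
        c ≠ CFluent.modeProg) ∨
      ∃ f, CFluent.addF ξ f ∈ s ∧ c = CFluent.world (groundVF ω f) := by
  have hdel : (∃ ce ∈ (applyAct ξ ω).effs, LitSet.Holds ce.1 s ∧ c ∈ ce.2.neg) ↔
      (∃ f, CFluent.delF ξ f ∈ s ∧ c = CFluent.world (groundVF ω f)) ∨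
        c = CFluent.modeProg := by
    constructor
    · rintro ⟨ce, ⟨f, rfl⟩ | ⟨f, rfl⟩ | rfl, hh, hc⟩
      · exact Or.inl ⟨f, hh.1 rfl, hc⟩
      · exact hc.elim
      · exact Or.inr hc
    · rintro (⟨f, hf, hc⟩ | hc)
      · exact ⟨_, Or.inl ⟨f, rfl⟩, ⟨Set.singleton_subset_iff.2 hf, fun _ h => h.elim⟩, hc⟩
      · exact ⟨_, Or.inr (Or.inr rfl), ⟨Set.empty_subset _, fun _ h => h.elim⟩, hc⟩
  have hadd : (∃ ce ∈ (applyAct ξ ω).effs, LitSet.Holds ce.1 s ∧ c ∈ ce.2.pos) ↔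
      ∃ f, CFluent.addF ξ f ∈ s ∧ c = CFluent.world (groundVF ω f) := by
    constructor
    · rintro ⟨ce, ⟨f, rfl⟩ | ⟨f, rfl⟩ | rfl, hh, hc⟩
      · exact hc.elim
      · exact ⟨f, hh.1 rfl, hc⟩
      · exact hc.elim
    · rintro ⟨f, hf, hc⟩
      exact ⟨_, Or.inr (Or.inl ⟨f, rfl⟩),
        ⟨Set.singleton_subset_iff.2 hf, fun _ h => h.elim⟩, hc⟩
  simp only [CondAction.succ, Set.mem_union, Set.mem_sdiff, Set.mem_ofPred_eq, hdel, hadd,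
    not_or, ne_eq]

/-- **Forward simulation of apply actions.** Let `s` be a state of the compiled task `P_Λ`
that encodes the action model `M` and the world state `w`. If `apply_{ξ,ω}` is applicable in
`s`, then the ground STRIPS action `ξ'(ω)` of `M` is applicable in `w`, and the successor
state encodes the same action model `M` and the world state `θ(w, ξ'(ω))`. -/
theorem apply_forward_simulation
    {P O X : Type*} {arP : P → ℕ} {arX : X → ℕ} {τ : ℕ}
    (s : Set (CFluent P O X arP arX τ)) (M : Model P arP X arX)
    (w : Set (GFluent P O arP))
    (hM : Encodes s M) (hw : EncodesWorld s w)
    (ξ : X) (ω : Fin (arX ξ) → O)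
    (happ : (applyAct ξ ω).Applicable s) :
    ((M ξ).ground ω).Applicable w ∧
    Encodes ((applyAct ξ ω).succ s) M ∧
    EncodesWorld ((applyAct ξ ω).succ s) (((M ξ).ground ω).succ w) := by
  refine ⟨?_, fun ζ f => ?_, fun g => ?_⟩
  · rintro _ ⟨f, hf, rfl⟩
    exact (hw _).1 (happ f ((hM ξ f).1.2 hf))
  · simpa [mem_succ_applyAct] using hM ζ f
  · have hD : (∃ f, CFluent.delF ξ f ∈ s ∧ g = groundVF ω f) ↔ g ∈ ((M ξ).ground ω).del := by
      simp only [Schema.ground, Set.mem_image, (hM ξ _).2.1, eq_comm]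
    have hA : (∃ f, CFluent.addF ξ f ∈ s ∧ g = groundVF ω f) ↔ g ∈ ((M ξ).ground ω).add := by
      simp only [Schema.ground, Set.mem_image, (hM ξ _).2.2, eq_comm]
    simp only [mem_succ_applyAct, CFluent.world.injEq, hD, hA, hw g, StripsAction.succ,
      Set.mem_union, Set.mem_sdiff, ne_eq, reduceCtorEq, not_false_eq_true, and_true]
end PlanLearn
end

section
/- Soundness of the compilation for labeled plans. Let Λ' = (Ψ, Σ, Π) be a learning task with example plans Π = ⟨π₁,…,π_τ⟩, and let P_{Λ'} be its compiled conditional-effects planning task. If π is a plan solving P_{Λ'}, then the action model Ξ' encoded by the state in which the first apply action of π is executed satisfies: for every 1 ≤ t ≤ τ, the ground-action sequence obtained from the example plan π_t by interpreting each step ξ(ω) as the ground STRIPS action ξ'(ω) is applicable in s₀ᵗ and its final state is sₙᵗ. In particular, Ξ' solves Λ'. -/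
/-!
The compiled task can only execute in one way. As long as `modeProg` holds, no `validate` action
is applicable, and the `program` actions change nothing but the encoded model; so the first
`apply` action is executed in a state whose world part, plan encoding and step counter are still
those of the first example. That action deletes `modeProg` for good, which freezes the encoded
model `M`. From then on the invariant `Progress` holds: the validated examples are exactly those
with index below some `t`, they are all followed under `M`, and the world part of the state is the
result of executing the first `k` steps of the `t`-th example plan, where `k` is the unique value
of the step counter. `apply` advances `k` (`progress_apply`), since its preconditions and
conditional effects on the world are those of the ground STRIPS action under `M`; `validate`
advances `t` (`progress_validate`), since it requires `k` to be the length of the plan and the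
world part to be the labelled final state. The goal forces `t = τ`.
-/


namespace PlanLearn

/-! ## The compiled task `P_{Λ'}` for learning from labeled plans -/

/-- Fluents of the compiled task `P_{Λ'}`: those of `P_Λ` plus the fluents `plan(ξ, ω, j)`
encoding the steps of the current example plan, and the step-counter fluents `at_j`. -/
inductive CFluent2 (P O X : Type*) (arP : P → ℕ) (arX : X → ℕ) (τ : ℕ) where
  | world : GFluent P O arP → CFluent2 P O X arP arX τ
  | preF : (ξ : X) → VFluent P arP (arX ξ) → CFluent2 P O X arP arX τ
  | delF : (ξ : X) → VFluent P arP (arX ξ) → CFluent2 P O X arP arX τ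
  | addF : (ξ : X) → VFluent P arP (arX ξ) → CFluent2 P O X arP arX τ
  | modeProg : CFluent2 P O X arP arX τ
  | test : Fin τ → CFluent2 P O X arP arX τ
  | planStep : (ξ : X) → (Fin (arX ξ) → O) → ℕ → CFluent2 P O X arP arX τ
  | atStep : ℕ → CFluent2 P O X arP arX τ

variable {P O X : Type*} {arP : P → ℕ} {arX : X → ℕ} {τ : ℕ}

/-- The encoding of an example plan: the fluent `plan(ξ, ω, j)` holds for each step `j` of
the plan, where `ξ(ω)` is the `j`-th step. -/
def planEnc (steps : List (GroundStep O X arX)) : Set (CFluent2 P O X arP arX τ) :=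
  {c | ∃ (j : ℕ) (st : GroundStep O X arX), steps[j]? = some st ∧
        c = CFluent2.planStep st.1 st.2 j}

/-- `programPre_{f,ξ}` of `P_{Λ'}`. -/
def programPre2 (ξ : X) (f : VFluent P arP (arX ξ)) :
    CondAction (CFluent2 P O X arP arX τ) where
  pre s := CFluent2.modeProg ∈ s ∧ CFluent2.preF ξ f ∈ s ∧
    CFluent2.delF ξ f ∉ s ∧ CFluent2.addF ξ f ∉ s
  effs := {(⟨∅, ∅⟩, ⟨∅, {CFluent2.preF ξ f}⟩)}

/-- `programEff_{f,ξ}` of `P_{Λ'}`. -/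
def programEff2 (ξ : X) (f : VFluent P arP (arX ξ)) :
    CondAction (CFluent2 P O X arP arX τ) where
  pre s := CFluent2.modeProg ∈ s ∧ CFluent2.delF ξ f ∉ s ∧ CFluent2.addF ξ f ∉ s
  effs := {(⟨{CFluent2.preF ξ f}, ∅⟩, ⟨{CFluent2.delF ξ f}, ∅⟩),
           (⟨∅, {CFluent2.preF ξ f}⟩, ⟨{CFluent2.addF ξ f}, ∅⟩)}

/-- `apply_{ξ,ω}` of `P_{Λ'}` at plan step `j`: additionally requires `at_j` and
`plan(ξ, ω, j)`, and replaces `at_j` by `at_{j+1}`. -/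
def applyAct2 (ξ : X) (ω : Fin (arX ξ) → O) (j : ℕ) :
    CondAction (CFluent2 P O X arP arX τ) where
  pre s := (∀ f : VFluent P arP (arX ξ),
      CFluent2.preF ξ f ∈ s → CFluent2.world (groundVF ω f) ∈ s) ∧
    CFluent2.atStep j ∈ s ∧ CFluent2.planStep ξ ω j ∈ s
  effs := {ce | (∃ f : VFluent P arP (arX ξ),
                  ce = (⟨{CFluent2.delF ξ f}, ∅⟩, ⟨∅, {CFluent2.world (groundVF ω f)}⟩)) ∨
                (∃ f : VFluent P arP (arX ξ),
                  ce = (⟨{CFluent2.addF ξ f}, ∅⟩, ⟨{CFluent2.world (groundVF ω f)}, ∅⟩)) ∨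
                ce = (⟨∅, ∅⟩,
                      ⟨{CFluent2.atStep (j + 1)}, {CFluent2.modeProg, CFluent2.atStep j}⟩)}

/-- The initial state of the example following example `t` (for the last example, its own
final state, i.e. no change of world fluents). -/
def nextInit2 (lab : Fin τ → Set (GFluent P O arP) × Set (GFluent P O arP)) (t : Fin τ) :
    Set (GFluent P O arP) :=
  if h : t.1 + 1 < τ then (lab ⟨t.1 + 1, h⟩).1 else (lab t).2

/-- The example plan following example `t` (empty after the last example). -/
def nextPlan (plans : Fin τ → List (GroundStep O X arX)) (t : Fin τ) :
    List (GroundStep O X arX) :=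
  if h : t.1 + 1 < τ then plans ⟨t.1 + 1, h⟩ else []

/-- `validate_t` of `P_{Λ'}`: additionally requires `at_{|π_t|}` (the whole plan `π_t` has
been executed), replaces the encoding of `π_t` by that of `π_{t+1}` and resets the step
counter. -/
def validate2 (plans : Fin τ → List (GroundStep O X arX))
    (lab : Fin τ → Set (GFluent P O arP) × Set (GFluent P O arP)) (t : Fin τ) :
    CondAction (CFluent2 P O X arP arX τ) where
  pre s := (∀ g, CFluent2.world g ∈ s ↔ g ∈ (lab t).2) ∧ CFluent2.modeProg ∉ s ∧
    (∀ j : Fin τ, CFluent2.test j ∈ s ↔ j < t) ∧ CFluent2.atStep (plans t).length ∈ s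
  effs := {(⟨∅, ∅⟩,
    ⟨insert (CFluent2.test t) (insert (CFluent2.atStep 0)
        ((CFluent2.world '' (nextInit2 lab t \ (lab t).2)) ∪
          (planEnc (nextPlan plans t) \ planEnc (plans t)))),
     insert (CFluent2.atStep (plans t).length)
        ((CFluent2.world '' ((lab t).2 \ nextInit2 lab t)) ∪
          (planEnc (plans t) \ planEnc (nextPlan plans t)))⟩)}

/-- The actions of the compiled task `P_{Λ'}`. -/
def compiledActs2 (plans : Fin τ → List (GroundStep O X arX))
    (lab : Fin τ → Set (GFluent P O arP) × Set (GFluent P O arP)) :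
    Set (CondAction (CFluent2 P O X arP arX τ)) :=
  {a | (∃ ξ f, a = programPre2 ξ f) ∨ (∃ ξ f, a = programEff2 ξ f) ∨
       (∃ ξ ω j, a = applyAct2 ξ ω j) ∨ (∃ t, a = validate2 plans lab t)}

/-- The initial state of `P_{Λ'}`: that of `P_Λ` plus the encoding of `π₁` and the initial
step counter. -/
def compiledInit2 [NeZero τ] (plans : Fin τ → List (GroundStep O X arX))
    (lab : Fin τ → Set (GFluent P O arP) × Set (GFluent P O arP)) :
    Set (CFluent2 P O X arP arX τ) :=
  {c | (∃ g ∈ (lab 0).1, c = CFluent2.world g) ∨ (∃ ξ f, c = CFluent2.preF ξ f) ∨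
       c = CFluent2.modeProg ∨ c ∈ planEnc (plans 0) ∨ c = CFluent2.atStep 0}

/-- The goal of `P_{Λ'}`: all the `test_t` fluents. -/
def compiledGoal2 : Set (CFluent2 P O X arP arX τ) := {c | ∃ t, c = CFluent2.test t}

/-- The compiled classical planning task with conditional effects `P_{Λ'}`. -/
def compiledTask2 [NeZero τ] (plans : Fin τ → List (GroundStep O X arX))
    (lab : Fin τ → Set (GFluent P O arP) × Set (GFluent P O arP)) :
    CondTask (CFluent2 P O X arP arX τ) :=
  ⟨compiledActs2 plans lab, compiledInit2 plans lab, compiledGoal2⟩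

/-- A state of `P_{Λ'}` encodes the action model `M`. -/
def Encodes2 (s : Set (CFluent2 P O X arP arX τ)) (M : Model P arP X arX) : Prop :=
  ∀ (ξ : X) (f : VFluent P arP (arX ξ)),
    (CFluent2.preF ξ f ∈ s ↔ f ∈ (M ξ).pre) ∧
    (CFluent2.delF ξ f ∈ s ↔ f ∈ (M ξ).del) ∧
    (CFluent2.addF ξ f ∈ s ↔ f ∈ (M ξ).add)

/-- The action model encoded by a state of `P_{Λ'}`. -/
def extractModel2 (s : Set (CFluent2 P O X arP arX τ)) : Model P arP X arX :=
  fun ξ => { pre := {f | CFluent2.preF ξ f ∈ s}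
             add := {f | CFluent2.addF ξ f ∈ s}
             del := {f | CFluent2.delF ξ f ∈ s} }

/-- `a` is one of the `apply_{ξ,ω}` actions of `P_{Λ'}`. -/
def IsApplyAction2 (a : CondAction (CFluent2 P O X arP arX τ)) : Prop :=
  ∃ (ξ : X) (ω : Fin (arX ξ) → O) (j : ℕ), a = applyAct2 ξ ω j

/-! ### Executions of action sequences -/

theorem condApplicable_append {F : Type*} (l₁ l₂ : List (CondAction F)) (s : Set F) :
    CondApplicable s (l₁ ++ l₂) ↔ CondApplicable s l₁ ∧ CondApplicable (CondExec s l₁) l₂ := by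
  induction l₁ generalizing s with
  | nil => simp [CondApplicable, CondExec]
  | cons a l ih => simp [CondApplicable, CondExec, ih, and_assoc]

theorem condExec_append {F : Type*} (l₁ l₂ : List (CondAction F)) (s : Set F) :
    CondExec s (l₁ ++ l₂) = CondExec (CondExec s l₁) l₂ := by
  induction l₁ generalizing s with
  | nil => simp [CondExec]
  | cons a l ih => simp [CondExec, ih]

theorem stripsApplicable_append {F : Type*} (l₁ l₂ : List (StripsAction F)) (s : Set F) :
    StripsApplicable s (l₁ ++ l₂) ↔
      StripsApplicable s l₁ ∧ StripsApplicable (StripsExec s l₁) l₂ := by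
  induction l₁ generalizing s with
  | nil => simp [StripsApplicable, StripsExec]
  | cons a l ih => simp [StripsApplicable, StripsExec, ih, and_assoc]

theorem stripsExec_append {F : Type*} (l₁ l₂ : List (StripsAction F)) (s : Set F) :
    StripsExec s (l₁ ++ l₂) = StripsExec (StripsExec s l₁) l₂ := by
  induction l₁ generalizing s with
  | nil => simp [StripsExec]
  | cons a l ih => simp [StripsExec, ih]

theorem FollowsExample.snoc {M : Model P arP X arX} {s0 s1 : Set (GFluent P O arP)}
    {steps : List (GroundStep O X arX)} (h : FollowsExample M s0 s1 steps)
    (st : GroundStep O X arX) (hst : ((M st.1).ground st.2).Applicable s1) :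
    FollowsExample M s0 (((M st.1).ground st.2).succ s1) (steps ++ [st]) := by
  obtain ⟨h1, rfl⟩ := h
  simp only [groundPlan] at *
  simp [FollowsExample, groundPlan, stripsApplicable_append, stripsExec_append,
    StripsApplicable, StripsExec, h1, hst]

theorem planStep_mem_planEnc {steps : List (GroundStep O X arX)} {ξ : X}
    {ω : Fin (arX ξ) → O} {j : ℕ} :
    (CFluent2.planStep ξ ω j : CFluent2 P O X arP arX τ) ∈ planEnc steps ↔
      steps[j]? = some ⟨ξ, ω⟩ := by
  constructor
  · rintro ⟨j', ⟨ξ', ω'⟩, h, he⟩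
    cases he
    exact h
  · intro h
    exact ⟨j, ⟨ξ, ω⟩, h, rfl⟩

/-! ### The invariant -/

/-- The world part of a state of the compiled task. -/
def worldPart (s : Set (CFluent2 P O X arP arX τ)) : Set (GFluent P O arP) :=
  {g | CFluent2.world g ∈ s}

/-- In state `s`, the first `k` steps of the example plan `steps`, started in `s0`, have been
executed under `M`, and the plan encoding and the step counter of `s` say so. -/
structure Running (M : Model P arP X arX) (s0 : Set (GFluent P O arP))
    (steps : List (GroundStep O X arX)) (k : ℕ) (s : Set (CFluent2 P O X arP arX τ)) :
    Prop where
  at_iff : ∀ i, CFluent2.atStep i ∈ s ↔ i = k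
  plan_iff : ∀ ξ ω i, CFluent2.planStep ξ ω i ∈ s ↔ steps[i]? = some ⟨ξ, ω⟩
  follows : FollowsExample M s0 (worldPart s) (steps.take k)

/-- The state `s` encodes `M`, exactly the examples with index below `t` are validated, all of
them are followed under `M`, and example `t`, if there is one, is being executed. -/
structure Progress (lab : Fin τ → Set (GFluent P O arP) × Set (GFluent P O arP))
    (plans : Fin τ → List (GroundStep O X arX)) (M : Model P arP X arX) (t : ℕ)
    (s : Set (CFluent2 P O X arP arX τ)) : Prop where
  enc : Encodes2 s M
  test_iff : ∀ i : Fin τ, CFluent2.test i ∈ s ↔ i.1 < t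
  done : ∀ i : Fin τ, i.1 < t → FollowsExample M (lab i).1 (lab i).2 (plans i)
  running : ∀ h : t < τ, ∃ k, Running M (lab ⟨t, h⟩).1 (plans ⟨t, h⟩) k s

/-! ### Programming phase -/

/-- Programming actions leave everything but the encoded model unchanged. -/
def SameButModel (s s' : Set (CFluent2 P O X arP arX τ)) : Prop :=
  (∀ g, CFluent2.world g ∈ s' ↔ CFluent2.world g ∈ s) ∧
  (CFluent2.modeProg ∈ s' ↔ CFluent2.modeProg ∈ s) ∧
  (∀ i, CFluent2.test i ∈ s' ↔ CFluent2.test i ∈ s) ∧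
  (∀ ξ ω j, CFluent2.planStep ξ ω j ∈ s' ↔ CFluent2.planStep ξ ω j ∈ s) ∧
  (∀ i, CFluent2.atStep i ∈ s' ↔ CFluent2.atStep i ∈ s)

theorem SameButModel.trans {s s' s'' : Set (CFluent2 P O X arP arX τ)}
    (h : SameButModel s s') (h' : SameButModel s' s'') : SameButModel s s'' := by
  obtain ⟨h1, h2, h3, h4, h5⟩ := h
  obtain ⟨k1, k2, k3, k4, k5⟩ := h'
  simp [SameButModel, *]

theorem sameButModel_programPre (ξ : X) (f : VFluent P arP (arX ξ))
    (s : Set (CFluent2 P O X arP arX τ)) :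
    SameButModel s ((programPre2 ξ f).succ s) := by
  simp [SameButModel, CondAction.succ, programPre2]

theorem sameButModel_programEff (ξ : X) (f : VFluent P arP (arX ξ))
    (s : Set (CFluent2 P O X arP arX τ)) :
    SameButModel s ((programEff2 ξ f).succ s) := by
  simp [SameButModel, CondAction.succ, programEff2]

/-- An apply-free applicable sequence started in programming mode consists of programming
actions: validation is blocked by `modeProg`. -/
theorem sameButModel_exec (lab : Fin τ → Set (GFluent P O arP) × Set (GFluent P O arP))
    (plans : Fin τ → List (GroundStep O X arX))
    (π : List (CondAction (CFluent2 P O X arP arX τ))) (s : Set (CFluent2 P O X arP arX τ))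
    (hm : CFluent2.modeProg ∈ s) (hacts : ∀ b ∈ π, b ∈ compiledActs2 plans lab)
    (hno : ∀ a ∈ π, ¬ IsApplyAction2 a) (happ : CondApplicable s π) :
    SameButModel s (CondExec s π) := by
  induction π generalizing s with
  | nil => simp [SameButModel, CondExec]
  | cons a π ih =>
    have key : SameButModel s (a.succ s) := by
      rcases hacts a (by simp) with ⟨ξ, f, rfl⟩ | ⟨ξ, f, rfl⟩ | h | ⟨t, rfl⟩
      · exact sameButModel_programPre ξ f s
      · exact sameButModel_programEff ξ f s
      · exact absurd h (hno a (by simp))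
      · exact absurd hm happ.1.2.1
    exact key.trans (ih (a.succ s) (key.2.1.2 hm) (fun b hb => hacts b (by simp [hb]))
      (fun b hb => hno b (by simp [hb])) happ.2)

/-! ### Execution phase -/

/-- On the world part, `apply_{ξ,ω}` acts as the ground STRIPS action of the encoded model. -/
theorem worldPart_apply {M : Model P arP X arX} {s : Set (CFluent2 P O X arP arX τ)}
    (henc : Encodes2 s M) (ξ : X) (ω : Fin (arX ξ) → O) (j : ℕ) :
    worldPart ((applyAct2 ξ ω j).succ s) = ((M ξ).ground ω).succ (worldPart s) := by
  ext g
  have hadd : (∃ ce ∈ (applyAct2 (τ := τ) (arP := arP) ξ ω j).effs, LitSet.Holds ce.1 s ∧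
      CFluent2.world g ∈ ce.2.pos) ↔ g ∈ ((M ξ).ground ω).add := by
    constructor
    · rintro ⟨ce, ⟨f, rfl⟩ | ⟨f, rfl⟩ | rfl, h, hg⟩
      · simp at hg
      · simp only [Set.mem_singleton_iff, CFluent2.world.injEq] at hg
        exact ⟨f, (henc ξ f).2.2.1 (h.1 rfl), hg.symm⟩
      · simp at hg
    · rintro ⟨f, hf, rfl⟩
      exact ⟨_, Or.inr (Or.inl ⟨f, rfl⟩), by simpa [LitSet.Holds] using (henc ξ f).2.2.2 hf, rfl⟩
  have hdel : (∃ ce ∈ (applyAct2 (τ := τ) (arP := arP) ξ ω j).effs, LitSet.Holds ce.1 s ∧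
      CFluent2.world g ∈ ce.2.neg) ↔ g ∈ ((M ξ).ground ω).del := by
    constructor
    · rintro ⟨ce, ⟨f, rfl⟩ | ⟨f, rfl⟩ | rfl, h, hg⟩
      · simp only [Set.mem_singleton_iff, CFluent2.world.injEq] at hg
        exact ⟨f, (henc ξ f).2.1.1 (h.1 rfl), hg.symm⟩
      · simp at hg
      · simp at hg
    · rintro ⟨f, hf, rfl⟩
      exact ⟨_, Or.inl ⟨f, rfl⟩, by simpa [LitSet.Holds] using (henc ξ f).2.1.2 hf, rfl⟩
  change (CFluent2.world g ∈ s ∧ ¬ _) ∨ _ ↔ (CFluent2.world g ∈ s ∧ ¬ _) ∨ _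
  exact or_congr (and_congr_right' (not_congr hdel)) hadd

theorem mem_apply_of_ne_world {s : Set (CFluent2 P O X arP arX τ)} (ξ : X)
    (ω : Fin (arX ξ) → O) (j : ℕ) (c : CFluent2 P O X arP arX τ)
    (hc : ∀ g, c ≠ CFluent2.world g) :
    c ∈ (applyAct2 ξ ω j).succ s ↔
      (c ∈ s ∧ c ≠ CFluent2.modeProg ∧ c ≠ CFluent2.atStep j) ∨
        c = CFluent2.atStep (j + 1) := by
  have hneg : (∃ ce ∈ (applyAct2 (τ := τ) (arP := arP) ξ ω j).effs, LitSet.Holds ce.1 s ∧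
      c ∈ ce.2.neg) ↔ c = CFluent2.modeProg ∨ c = CFluent2.atStep j := by
    constructor
    · rintro ⟨ce, ⟨f, rfl⟩ | ⟨f, rfl⟩ | rfl, -, h⟩
      · exact absurd h (hc _)
      · exact absurd h (by simp)
      · simpa using h
    · intro h
      exact ⟨_, Or.inr (Or.inr rfl), by simp [LitSet.Holds], by simpa using h⟩
  have hpos : (∃ ce ∈ (applyAct2 (τ := τ) (arP := arP) ξ ω j).effs, LitSet.Holds ce.1 s ∧
      c ∈ ce.2.pos) ↔ c = CFluent2.atStep (j + 1) := by
    constructor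
    · rintro ⟨ce, ⟨f, rfl⟩ | ⟨f, rfl⟩ | rfl, -, h⟩
      · exact absurd h (by simp)
      · exact absurd h (hc _)
      · simpa using h
    · intro h
      exact ⟨_, Or.inr (Or.inr rfl), by simp [LitSet.Holds], by simpa using h⟩
  change (c ∈ s ∧ ¬ _) ∨ _ ↔ _
  rw [← not_or]
  exact or_congr (and_congr_right' (not_congr hneg)) hpos

theorem progress_apply {lab : Fin τ → Set (GFluent P O arP) × Set (GFluent P O arP)}
    {plans : Fin τ → List (GroundStep O X arX)} {M : Model P arP X arX} {t : ℕ}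
    {s : Set (CFluent2 P O X arP arX τ)} (hs : Progress lab plans M t s) {ξ : X}
    {ω : Fin (arX ξ) → O} {j : ℕ} (happ : (applyAct2 ξ ω j).Applicable s) :
    Progress lab plans M t ((applyAct2 ξ ω j).succ s) where
  enc ξ' f := by
    have h := hs.enc ξ' f
    simpa [mem_apply_of_ne_world] using h
  test_iff i := by simpa [mem_apply_of_ne_world] using hs.test_iff i
  done := hs.done
  running h := by
    obtain ⟨k, hk⟩ := hs.running h
    obtain ⟨hpre, hat, hplan⟩ := happ
    obtain rfl : j = k := (hk.at_iff j).1 hat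
    refine ⟨j + 1, ?_, ?_, ?_⟩
    · intro i
      have := hk.at_iff i
      rw [mem_apply_of_ne_world _ _ _ _ (by simp)]
      simp only [ne_eq, CFluent2.atStep.injEq]
      tauto
    · intro ξ' ω' i
      simpa [mem_apply_of_ne_world] using hk.plan_iff ξ' ω' i
    · rw [worldPart_apply hs.enc, List.take_add_one, (hk.plan_iff ξ ω j).1 hplan]
      refine hk.follows.snoc ⟨ξ, ω⟩ ?_
      rintro _ ⟨f, hf, rfl⟩
      exact hpre f ((hs.enc ξ f).1.2 hf)

theorem progress_validate {lab : Fin τ → Set (GFluent P O arP) × Set (GFluent P O arP)}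
    {plans : Fin τ → List (GroundStep O X arX)} {M : Model P arP X arX} {t : ℕ}
    {s : Set (CFluent2 P O X arP arX τ)} (hs : Progress lab plans M t s) {t' : Fin τ}
    (happ : (validate2 plans lab t').Applicable s) :
    Progress lab plans M (t + 1) ((validate2 plans lab t').succ s) := by
  obtain ⟨hworld, -, htest, hat⟩ := happ
  -- `validate` can only validate the example being executed
  obtain rfl : t = t'.1 := by
    have h1 : t ≤ t'.1 := by
      by_contra! h
      exact lt_irrefl _ ((htest t').1 ((hs.test_iff t').2 h))
    by_contra hne
    have h2 : t < t'.1 := lt_of_le_of_ne h1 hne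
    exact lt_irrefl t ((hs.test_iff ⟨t, h2.trans t'.2⟩).1 ((htest ⟨t, _⟩).2 h2))
  obtain ⟨k, hk⟩ := hs.running t'.2
  obtain rfl := (hk.at_iff _).1 hat
  have hw : worldPart s = (lab t').2 := Set.ext hworld
  refine ⟨?_, ?_, ?_, ?_⟩
  · intro ξ f
    simpa [CondAction.succ, validate2, LitSet.Holds, planEnc] using hs.enc ξ f
  · intro i
    have h1 : CFluent2.test i ∈ (validate2 plans lab t').succ s ↔
        CFluent2.test i ∈ s ∨ i = t' := by
      simp [CondAction.succ, validate2, LitSet.Holds, planEnc, or_comm]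
    rw [h1, hs.test_iff, Fin.ext_iff]
    omega
  · intro i hi
    rcases Nat.lt_succ_iff_lt_or_eq.1 hi with h | h
    · exact hs.done i h
    · obtain rfl : i = t' := Fin.ext h
      have := hk.follows
      rwa [List.take_length, hw] at this
  · intro h
    refine ⟨0, ?_, ?_, ?_⟩
    · intro i
      have := hk.at_iff i
      simp only [CondAction.succ, validate2, LitSet.Holds, planEnc]
      simp [this]
    · intro ξ ω i
      have h1 := hk.plan_iff ξ ω i
      have h2 : CFluent2.planStep ξ ω i ∈ (validate2 plans lab t').succ s ↔
          (CFluent2.planStep ξ ω i ∈ s ∧ ((plans t')[i]? = some ⟨ξ, ω⟩ →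
            (nextPlan plans t')[i]? = some ⟨ξ, ω⟩)) ∨
          ((nextPlan plans t')[i]? = some ⟨ξ, ω⟩ ∧ ¬ (plans t')[i]? = some ⟨ξ, ω⟩) := by
        simp [CondAction.succ, validate2, LitSet.Holds, planStep_mem_planEnc]
      rw [h2, h1]
      simp only [nextPlan, h, dite_true, Fin.eta]
      tauto
    · have h2 : worldPart ((validate2 plans lab t').succ s) = nextInit2 lab t' := by
        ext g
        have h3 : g ∈ worldPart ((validate2 plans lab t').succ s) ↔
            (CFluent2.world g ∈ s ∧ (g ∈ (lab t').2 → g ∈ nextInit2 lab t')) ∨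
            (g ∈ nextInit2 lab t' ∧ g ∉ (lab t').2) := by
          simp [worldPart, CondAction.succ, validate2, LitSet.Holds, planEnc]
        rw [h3, hworld]
        tauto
      rw [h2]
      simp [nextInit2, h, FollowsExample, groundPlan, StripsApplicable, StripsExec]

/-- Once programming mode is left, every applicable sequence of compiled actions preserves the
invariant, since the programming actions are no longer applicable. -/
theorem progress_exec {lab : Fin τ → Set (GFluent P O arP) × Set (GFluent P O arP)}
    {plans : Fin τ → List (GroundStep O X arX)} {M : Model P arP X arX} {t : ℕ}
    {s : Set (CFluent2 P O X arP arX τ)} (hs : Progress lab plans M t s)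
    (hm : CFluent2.modeProg ∉ s) (π : List (CondAction (CFluent2 P O X arP arX τ)))
    (hacts : ∀ b ∈ π, b ∈ compiledActs2 plans lab) (happ : CondApplicable s π) :
    ∃ t', Progress lab plans M t' (CondExec s π) := by
  induction π generalizing s t with
  | nil => exact ⟨t, hs⟩
  | cons a π ih =>
    have hrest : ∀ b ∈ π, b ∈ compiledActs2 plans lab := fun b hb => hacts b (by simp [hb])
    obtain ⟨ha, hπ⟩ := happ
    rcases hacts a (by simp) with ⟨ξ, f, rfl⟩ | ⟨ξ, f, rfl⟩ | ⟨ξ, ω, j, rfl⟩ | ⟨t', rfl⟩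
    · exact absurd ha.1 hm
    · exact absurd ha.1 hm
    · exact ih (progress_apply hs ha) (by simp [mem_apply_of_ne_world]) hrest hπ
    · refine ih (progress_validate hs ha) ?_ hrest hπ
      simp [CondAction.succ, validate2, planEnc, hm]

/-- **Soundness of the compilation for labeled plans.** If `π₁ ++ apply_{ξ,ω,j} :: π₂` is a
plan solving the compiled task `P_{Λ'}` whose first apply action is the displayed one, then
the action model `M` encoded by the state in which that first apply action is executed
satisfies: for every example `t`, the ground-action sequence obtained from the example plan
`π_t` under `M` is applicable in `s₀ᵗ` and its final state is `sₙᵗ`; i.e., `M` solves `Λ'`. -/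
theorem soundness_labeled_plans
    {P O X : Type*} {arP : P → ℕ} {arX : X → ℕ} {τ : ℕ} [NeZero τ]
    (lab : Fin τ → Set (GFluent P O arP) × Set (GFluent P O arP))
    (plans : Fin τ → List (GroundStep O X arX))
    (π₁ π₂ : List (CondAction (CFluent2 P O X arP arX τ)))
    (ξ : X) (ω : Fin (arX ξ) → O) (j : ℕ)
    (hsolves : (compiledTask2 plans lab).Solves (π₁ ++ applyAct2 ξ ω j :: π₂))
    (hfirst : ∀ a ∈ π₁, ¬ IsApplyAction2 a) :
    ∀ t : Fin τ,
      FollowsExample (extractModel2 (CondExec (compiledTask2 plans lab).init π₁))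
        (lab t).1 (lab t).2 (plans t) := by
  obtain ⟨hacts, happ, hgoal⟩ := hsolves
  rw [condApplicable_append] at happ
  rw [condExec_append] at hgoal
  obtain ⟨happ₁, hap, happ₂⟩ := happ
  have hsame := sameButModel_exec lab plans π₁ (compiledTask2 plans lab).init
    (Or.inr (Or.inr (Or.inl rfl))) (fun b hb => hacts b (by simp [hb])) hfirst happ₁
  set s := CondExec (compiledTask2 plans lab).init π₁ with hs
  obtain ⟨hw, -, ht, hp, hat⟩ := hsame
  have hτ : 0 < τ := NeZero.pos τ
  have h0 : (⟨0, hτ⟩ : Fin τ) = 0 := rfl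
  have start : Progress lab plans (extractModel2 s) 0 s := by
    refine ⟨fun ξ f => ⟨Iff.rfl, Iff.rfl, Iff.rfl⟩, ?_, by simp, fun h => ⟨0, ?_, ?_, ?_⟩⟩
    · intro i
      simp [ht, compiledTask2, compiledInit2, planEnc]
    · intro i
      simp [hat, compiledTask2, compiledInit2, planEnc]
    · intro ξ ω i
      rw [hp, h0, ← planStep_mem_planEnc (P := P) (arP := arP) (τ := τ)]
      simp [compiledTask2, compiledInit2]
    · have h1 : worldPart s = (lab 0).1 := by
        ext g
        refine (hw g).trans ?_
        simp [compiledTask2, compiledInit2, planEnc]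
      rw [h1, h0]
      simp [FollowsExample, groundPlan, StripsApplicable, StripsExec]
  obtain ⟨t', hfin⟩ := progress_exec (progress_apply start hap)
    (by simp [mem_apply_of_ne_world]) π₂ (fun b hb => hacts b (by simp [hb])) happ₂
  intro t
  exact hfin.done t ((hfin.test_iff t).1 (hgoal ⟨t, rfl⟩))
end PlanLearn
end
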